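/- arXiv:0709.3349 — 3 statements merged into one kernel-verified Lean document; each statement's English description precedes it below -/
import Mathlib

section
/- Let $A$ be a nonempty bounded measurable subset of $\mathbb{R}^n$ ($n \geq 1$) contained in the closed ball $B(q_0, R)$ for some $q_0 \in \mathbb{R}^n$ and $R > 0$, and let $G \colon \mathbb{R} \to \mathbb{R}$ be continuous on $[0, 2R]$ and strictly positive on $(0, 2R)$. Then there exists a point $p$ in the closed convex hull of $A$ such that $\int_A G(\lVert x - p \rVert)\,(x - p)\, d\lambda(x) = 0$, where $\lambda$ is Lebesgue measure and the integral is the Bochner integral of the $\mathbb{R}^n$-valued integrand. -/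
open MeasureTheory

/-- The potential of a central force: `u ↦ ½ ∫₀^{‖u‖²} g(√s) ds`. -/
noncomputable def radialPotential {E : Type*} [Norm E] (g : ℝ → ℝ) (u : E) : ℝ :=
  ∫ s in (0 : ℝ)..‖u‖ ^ 2, g (√s) / 2

theorem continuous_radialPotential {E : Type*} [SeminormedAddCommGroup E] {g : ℝ → ℝ}
    (hg : Continuous g) :
    Continuous (radialPotential g : E → ℝ) := by
  have hc : Continuous fun s => g (√s) / 2 := by fun_prop
  have h : Continuous fun r : ℝ => ∫ s in (0 : ℝ)..r, g (√s) / 2 :=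
    intervalIntegral.continuous_primitive (fun a b => hc.intervalIntegrable a b) 0
  exact h.comp (by fun_prop : Continuous fun u : E => ‖u‖ ^ 2)

theorem hasDerivAt_radialPotential_sub_smul {E : Type*} [NormedAddCommGroup E]
    [InnerProductSpace ℝ E] {g : ℝ → ℝ} (hg : Continuous g) (w v : E) (t : ℝ) :
    HasDerivAt (fun t : ℝ => radialPotential g (w - t • v))
      (-(g ‖w - t • v‖ * inner ℝ (w - t • v) v)) t := by
  have hc : Continuous fun s => g (√s) / 2 := by fun_prop
  have hline : HasDerivAt (fun t : ℝ => w - t • v) (-v) t := by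
    simpa using ((hasDerivAt_id t).smul_const v).const_sub w
  have hprim := hc.integral_hasStrictDerivAt 0 (‖w - t • v‖ ^ 2) |>.hasDerivAt
  refine (hprim.comp t hline.norm_sq).congr_deriv ?_
  rw [Real.sqrt_sq (norm_nonneg _), inner_neg_right]
  ring

/-- A central force field with nonnegative continuous profile vanishes on average over `A`
at some point of any compact convex set containing `A`. -/
theorem exists_setIntegral_smul_sub_eq_zero {E : Type*} [NormedAddCommGroup E]
    [InnerProductSpace ℝ E] [CompleteSpace E] [MeasurableSpace E] [BorelSpace E]
    [LocallyCompactSpace E] [SecondCountableTopology E]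
    {μ : Measure E} [IsFiniteMeasureOnCompacts μ]
    {A K : Set E} (hA : MeasurableSet A) (hAK : A ⊆ K) (hK : IsCompact K)
    (hKconv : Convex ℝ K) (hKne : K.Nonempty) {g : ℝ → ℝ} (hg : Continuous g)
    (hg0 : ∀ t, 0 ≤ g t) :
    ∃ p ∈ K, ∫ x in A, g ‖x - p‖ • (x - p) ∂μ = 0 := by
  have hAfin : μ A ≠ ⊤ := measure_ne_top_of_subset hAK hK.measure_ne_top
  let Φ : E → ℝ := fun p => ∫ x in A, radialPotential g (x - p) ∂μ
  have hΦ : Continuous Φ := by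
    have h := continuous_parametric_integral_of_continuous (μ := μ.restrict A)
      (f := fun p x : E => radialPotential g (x - p))
      ((continuous_radialPotential hg).comp (by fun_prop : Continuous fun z : E × E => z.2 - z.1))
      hK
    simpa only [Measure.restrict_restrict hK.measurableSet, Set.inter_eq_right.2 hAK] using h
  obtain ⟨p, hpK, hmin⟩ := hK.exists_isMinOn hKne hΦ.continuousOn
  refine ⟨p, hpK, ?_⟩
  set V := ∫ x in A, g ‖x - p‖ • (x - p) ∂μ with hV
  have hVint : IntegrableOn (fun x => g ‖x - p‖ • (x - p)) A μ :=
    ContinuousOn.integrableOn_of_subset_isCompact (by fun_prop) hK hA hAK hAfin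
  have hinner (v : E) : ∫ x in A, g ‖x - p‖ * inner ℝ (x - p) v ∂μ = inner ℝ V v := by
    rw [real_inner_comm, hV, ← integral_inner hVint]
    simp only [inner_smul_right, real_inner_comm]
  have hderiv (v : E) : HasDerivAt (fun t : ℝ => Φ (p + t • v)) (-inner ℝ V v) 0 := by
    have hcont : Continuous fun z : ℝ × E =>
        -(g ‖z.2 - p - z.1 • v‖ * inner ℝ (z.2 - p - z.1 • v) v) := by fun_prop
    obtain ⟨C, hC⟩ := ((isCompact_closedBall (0 : ℝ) 1).prod hK).exists_bound_of_continuousOn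
      hcont.continuousOn
    have hpot (t : ℝ) : IntegrableOn (fun x => radialPotential g (x - p - t • v)) A μ :=
      ((continuous_radialPotential hg).comp (by fun_prop : Continuous fun x : E =>
        x - p - t • v)).continuousOn.integrableOn_of_subset_isCompact hK hA hAK hAfin
    have h := (hasDerivAt_integral_of_dominated_loc_of_deriv_le (μ := μ.restrict A)
      (F := fun (t : ℝ) x => radialPotential g (x - p - t • v))
      (F' := fun t x => -(g ‖x - p - t • v‖ * inner ℝ (x - p - t • v) v))
      (bound := fun _ => C) (x₀ := 0) (Metric.closedBall_mem_nhds 0 one_pos)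
      (.of_forall fun t => (hpot t).aestronglyMeasurable) (hpot 0)
      (hcont.comp (Continuous.prodMk_right 0)).aestronglyMeasurable
      (ae_restrict_of_forall_mem hA fun x hx t ht => hC (t, x) ⟨ht, hAK hx⟩)
      (continuousOn_const.integrableOn_of_subset_isCompact hK hA hAK hAfin)
      (.of_forall fun x t _ => hasDerivAt_radialPotential_sub_smul hg (x - p) v t)).2
    simp only [zero_smul, sub_zero, integral_neg, hinner] at h
    simpa only [Φ, sub_sub] using h
  have hle {y : E} (hy : y ∈ K) : inner ℝ V (y - p) ≤ 0 := by
    have hlim := (hderiv (y - p)).tendsto_slope_zero_right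
    have : 0 ≤ -inner ℝ V (y - p) := by
      refine ge_of_tendsto hlim ?_
      filter_upwards [Ioc_mem_nhdsGT one_pos] with t ht
      have hmem : p + t • (y - p) ∈ K :=
        hKconv.add_smul_sub_mem hpK hy ⟨ht.1.le, ht.2⟩
      have hval : Φ p ≤ Φ (p + t • (y - p)) := hmin hmem
      simp only [zero_add, zero_smul, add_zero, smul_eq_mul]
      exact mul_nonneg (inv_nonneg.2 ht.1.le) (sub_nonneg.2 hval)
    linarith
  have hVV : inner ℝ V V ≤ 0 := by
    rw [← hinner V]
    refine setIntegral_nonpos hA fun x hx => mul_nonpos_of_nonneg_of_nonpos (hg0 _) ?_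
    rw [real_inner_comm]
    exact hle (hAK hx)
  exact inner_self_eq_zero.1 (hVV.antisymm real_inner_self_nonneg)

/-- Euclidean case of the center-of-mass theorem: for a nonempty bounded measurable
set `A ⊆ closedBall q₀ R` and a mass distribution function `G` continuous on `[0, 2R]`
and positive on `(0, 2R)`, there is a point `p` in the closed convex hull of `A` with
`∫_A G(‖x - p‖) (x - p) dx = 0`. -/
theorem center_of_mass_euclidean
    {n : ℕ} (hn : 1 ≤ n) (A : Set (EuclideanSpace ℝ (Fin n)))
    (hA : A.Nonempty) (hAmeas : MeasurableSet A)
    (q₀ : EuclideanSpace ℝ (Fin n)) (R : ℝ) (hR : 0 < R)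
    (hAball : A ⊆ Metric.closedBall q₀ R)
    (G : ℝ → ℝ) (hGcont : ContinuousOn G (Set.Icc 0 (2 * R)))
    (hGpos : ∀ t ∈ Set.Ioo 0 (2 * R), 0 < G t) :
    ∃ p ∈ closure (convexHull ℝ A),
      ∫ x in A, G ‖x - p‖ • (x - p) = 0 := by
  have h2R : (0 : ℝ) < 2 * R := by positivity
  have hKball : closure (convexHull ℝ A) ⊆ Metric.closedBall q₀ R :=
    closure_minimal (convexHull_min hAball (convex_closedBall q₀ R)) Metric.isClosed_closedBall
  have hAK : A ⊆ closure (convexHull ℝ A) := (subset_convexHull ℝ A).trans subset_closure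
  have hG0 : ∀ t ∈ Set.Icc 0 (2 * R), 0 ≤ G t := by
    rw [← closure_Ioo h2R.ne] at hGcont ⊢
    exact fun t ht => le_on_closure (fun s hs => (hGpos s hs).le) continuousOn_const hGcont ht
  obtain ⟨p, hp, h⟩ := exists_setIntegral_smul_sub_eq_zero (μ := volume) hAmeas hAK
    ((isCompact_closedBall q₀ R).of_isClosed_subset isClosed_closure hKball)
    (convex_convexHull ℝ A).closure (hA.mono hAK)
    (hGcont.domRestrict.Icc_extend' (h := h2R.le)) (fun t => hG0 _ (Set.projIcc 0 _ h2R.le t).2)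
  refine ⟨p, hp, h ▸ setIntegral_congr_fun hAmeas fun x hx => ?_⟩
  have hdist : ‖x - p‖ ∈ Set.Icc 0 (2 * R) := by
    refine ⟨norm_nonneg _, ?_⟩
    rw [← dist_eq_norm, two_mul]
    exact (dist_triangle_right x p q₀).trans (add_le_add (hAball hx) (hKball hp))
  simp only [Set.IccExtend_of_mem h2R.le _ hdist, Set.domRestrict_apply]
end

section
/- Let $\mu$ be a nonzero finite Borel measure on $\mathbb{R}^n$ with bounded support such that $\mu(\{q\}) = 0$ for every $q \in \mathbb{R}^n$. Then there exists a point $p$ in the closed convex hull of the support of $\mu$ such that $\int_{\mathbb{R}^n} u(x - p)\, d\mu(x) = 0$, where $u(y) = y / \lVert y \rVert$ for $y \neq 0$ and $u(0) = 0$. -/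
open MeasureTheory

/-- The (topological) support of a measure: the set of points all of whose
neighbourhoods have positive measure. -/
def measureSupport {α : Type*} [TopologicalSpace α] [MeasurableSpace α] (μ : Measure α) : Set α :=
  {x | ∀ U ∈ nhds x, μ U ≠ 0}

open Filter Topology

theorem continuous_integral_norm_sub {E : Type*} [NormedAddCommGroup E] [MeasurableSpace E]
    [BorelSpace E] {μ : Measure E} [IsFiniteMeasure μ] (hint : Integrable (fun x => x) μ) :
    Continuous fun p : E => ∫ x, ‖x - p‖ ∂μ := by
  refine continuous_iff_continuousAt.2 fun p => ?_
  refine continuousAt_of_dominated (bound := fun x => ‖x‖ + (‖p‖ + 1))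
    (Eventually.of_forall fun q => (by fun_prop : Continuous fun x => ‖x - q‖).aestronglyMeasurable)
    ?_ (hint.norm.add (integrable_const _)) (ae_of_all _ fun x => by fun_prop)
  filter_upwards [continuous_norm.continuousAt.eventually_lt_const (lt_add_one ‖p‖)] with q hq
  refine ae_of_all _ fun x => ?_
  rw [norm_norm]
  linarith [norm_sub_le x q]

section UnitField

variable {E : Type*} [NormedAddCommGroup E] [InnerProductSpace ℝ E]

theorem norm_inv_norm_smul_le_one (y : E) : ‖‖y‖⁻¹ • y‖ ≤ 1 := by
  rw [norm_smul, norm_inv, norm_norm]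
  exact inv_mul_le_one

/-- The unit vector `y / ‖y‖` is a subgradient of the norm at `y`. -/
theorem norm_add_inner_inv_norm_smul_le (y v : E) :
    ‖y‖ + inner ℝ (‖y‖⁻¹ • y) v ≤ ‖y + v‖ := by
  have h : inner ℝ (‖y‖⁻¹ • y) y = ‖y‖ := by
    rw [real_inner_smul_left, real_inner_self_eq_norm_sq]
    rcases eq_or_ne ‖y‖ 0 with h | h
    · simp [h]
    · field_simp
  calc ‖y‖ + inner ℝ (‖y‖⁻¹ • y) v = inner ℝ (‖y‖⁻¹ • y) (y + v) := by
        rw [inner_add_right, h]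
    _ ≤ ‖‖y‖⁻¹ • y‖ * ‖y + v‖ := real_inner_le_norm _ _
    _ ≤ ‖y + v‖ := mul_le_of_le_one_left (norm_nonneg _) (norm_inv_norm_smul_le_one y)

variable [MeasurableSpace E] [BorelSpace E] [SecondCountableTopology E]
  {μ : Measure E} [IsFiniteMeasure μ]

theorem integrable_inv_norm_smul_sub (p : E) :
    Integrable (fun x => ‖x - p‖⁻¹ • (x - p)) μ := by
  refine Integrable.of_bound (C := 1) ?_ (ae_of_all _ fun x => norm_inv_norm_smul_le_one _)
  exact Measurable.aestronglyMeasurable (by fun_prop)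

theorem continuousAt_integral_inv_norm_smul_sub {p : E} (hp : μ {p} = 0) :
    ContinuousAt (fun q => ∫ x, ‖x - q‖⁻¹ • (x - q) ∂μ) p := by
  refine continuousAt_of_dominated (bound := fun _ => 1)
    (Eventually.of_forall fun q => (integrable_inv_norm_smul_sub q).aestronglyMeasurable)
    (Eventually.of_forall fun q => ae_of_all _ fun x => norm_inv_norm_smul_le_one _)
    (integrable_const _) ?_
  have hne : ∀ᵐ x ∂μ, x ≠ p := by simpa [ae_iff] using hp
  filter_upwards [hne] with x hx
  have : ‖x - p‖ ≠ 0 := norm_ne_zero_iff.2 (sub_ne_zero.2 hx)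
  fun_prop (disch := assumption)

/-- The integrated unit field is, up to sign, a subgradient of `p ↦ ∫ ‖x - p‖`. -/
theorem integral_norm_sub_add_inner_le [CompleteSpace E] (hint : Integrable (fun x => x) μ)
    (p q : E) :
    ∫ x, ‖x - q‖ ∂μ + inner ℝ (∫ x, ‖x - q‖⁻¹ • (x - q) ∂μ) (q - p) ≤ ∫ x, ‖x - p‖ ∂μ := by
  have hnorm (r : E) : Integrable (fun x => ‖x - r‖) μ := (hint.sub (integrable_const r)).norm
  have hu := (integrable_inv_norm_smul_sub (μ := μ) q).const_inner (𝕜 := ℝ) (q - p)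
  rw [real_inner_comm, ← integral_inner (integrable_inv_norm_smul_sub q) (q - p),
    ← integral_add (hnorm q) hu]
  refine integral_mono ((hnorm q).add hu) (hnorm p) fun x => ?_
  have := norm_add_inner_inv_norm_smul_le (x - q) (q - p)
  rwa [sub_add_sub_cancel, real_inner_comm] at this

/-- A minimizer of `p ↦ ∫ ‖x - p‖` over a convex set carrying `μ` balances the unit field. -/
theorem IsMinOn.integral_inv_norm_smul_sub_eq_zero [CompleteSpace E]
    (hint : Integrable (fun x => x) μ) {K : Set E} (hK : Convex ℝ K) (hμK : ∀ᵐ x ∂μ, x ∈ K)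
    {p : E} (hpK : p ∈ K) (hp : μ {p} = 0) (hmin : IsMinOn (fun q => ∫ x, ‖x - q‖ ∂μ) K p) :
    ∫ x, ‖x - p‖⁻¹ • (x - p) ∂μ = 0 := by
  set V : E → E := fun q => ∫ x, ‖x - q‖⁻¹ • (x - q) ∂μ with hV
  have hvar : ∀ y ∈ K, inner ℝ (V p) (y - p) ≤ 0 := by
    intro y hy
    have hlim : Tendsto (fun t : ℝ => inner ℝ (V (p + t • (y - p))) (y - p)) (𝓝[>] 0)
        (𝓝 (inner ℝ (V p) (y - p))) := by
      have hline : Tendsto (fun t : ℝ => p + t • (y - p)) (𝓝[>] 0) (𝓝 p) := by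
        have : Continuous fun t : ℝ => p + t • (y - p) := by fun_prop
        simpa using (this.tendsto 0).mono_left nhdsWithin_le_nhds
      exact ((continuousAt_integral_inv_norm_smul_sub hp).tendsto.comp hline).inner
        tendsto_const_nhds
    refine le_of_tendsto hlim ?_
    filter_upwards [Ioo_mem_nhdsGT (zero_lt_one' ℝ)] with t ht
    have hq : p + t • (y - p) ∈ K := hK.add_smul_sub_mem hpK hy ⟨ht.1.le, ht.2.le⟩
    have hle := integral_norm_sub_add_inner_le hint p (p + t • (y - p))
    have hge : ∫ x, ‖x - p‖ ∂μ ≤ ∫ x, ‖x - (p + t • (y - p))‖ ∂μ := hmin hq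
    have hprod : t * inner ℝ (V (p + t • (y - p))) (y - p) ≤ 0 := by
      rw [← real_inner_smul_right]
      rw [add_sub_cancel_left] at hle
      simp only [hV]
      linarith
    exact nonpos_of_mul_nonpos_right hprod ht.1
  have hself : inner ℝ (V p) (V p) ≤ 0 := by
    rw [show inner ℝ (V p) (V p) = ∫ x, inner ℝ (V p) (‖x - p‖⁻¹ • (x - p)) ∂μ from
      (integral_inner (integrable_inv_norm_smul_sub p) (V p)).symm]
    refine integral_nonpos_of_ae ?_
    filter_upwards [hμK] with x hx
    rw [real_inner_smul_right]
    exact mul_nonpos_of_nonneg_of_nonpos (by positivity) (hvar x hx)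
  exact inner_self_eq_zero.1 (hself.antisymm real_inner_self_nonneg)

end UnitField

theorem measureSupport_eq_support {α : Type*} [TopologicalSpace α] [MeasurableSpace α]
    (μ : Measure α) : measureSupport μ = μ.support := by
  ext x
  simp [measureSupport, Measure.mem_support_iff_forall, pos_iff_ne_zero]

/-- Center-of-mass with mass distribution `G(t) = 1/t`: for a nonzero finite Borel
measure `μ` on `ℝⁿ` with bounded support and no atoms, there is a point `p` in the
closed convex hull of the support of `μ` such that `∫ (x - p)/‖x - p‖ dμ(x) = 0`. -/
theorem center_of_mass_inverse_distance
    {n : ℕ} (μ : Measure (EuclideanSpace ℝ (Fin n))) [IsFiniteMeasure μ]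
    (hμ : μ ≠ 0) (hsupp : Bornology.IsBounded (measureSupport μ))
    (hatom : ∀ q : EuclideanSpace ℝ (Fin n), μ {q} = 0) :
    ∃ p ∈ closure (convexHull ℝ (measureSupport μ)),
      ∫ x, ‖x - p‖⁻¹ • (x - p) ∂μ = 0 := by
  rw [measureSupport_eq_support] at hsupp ⊢
  have hae : ∀ᵐ x ∂μ, x ∈ μ.support := Measure.support_mem_ae
  have hint : Integrable (fun x => x) μ := by
    obtain ⟨C, hC⟩ := hsupp.exists_norm_le
    exact Integrable.of_bound measurable_id.aestronglyMeasurable C (hae.mono hC)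
  have hcompact : IsCompact (closure (convexHull ℝ μ.support)) :=
    (isBounded_convexHull.2 hsupp).isCompact_closure
  obtain ⟨p, hpK, hmin⟩ := hcompact.exists_isMinOn
    (Measure.nonempty_support hμ).convexHull.closure
    (continuous_integral_norm_sub hint).continuousOn
  exact ⟨p, hpK, hmin.integral_inv_norm_smul_sub_eq_zero hint (convex_convexHull ℝ _).closure
    (hae.mono fun x hx => subset_closure (subset_convexHull ℝ _ hx)) hpK (hatom p)⟩
end

section
/- Let $n \geq 1$, let $x \in \mathbb{R}^n$ with $x \neq 0$, let $\nu \in \mathbb{R}^n$ with $\lVert \nu \rVert = 1$, and for $1 \leq i \leq n$ let $f_i(y) = y_i/\lVert y \rVert$. Then $\sum_{i=1}^{n} \big\lVert \nabla f_i(x) - \langle \nabla f_i(x), \nu \rangle\, \nu \big\rVert^2 = \frac{n-2}{\lVert x \rVert^2} + \frac{\langle x, \nu \rangle^2}{\lVert x \rVert^4} \leq \frac{n-1}{\lVert x \rVert^2}$, with equality if and only if $\nu = x/\lVert x \rVert$ or $\nu = -x/\lVert x \rVert$. -/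
open scoped RealInnerProductSpace

/-- The gradient of `y ↦ y i / ‖y‖` away from the origin. -/
lemma hasGradientAt_coord_div_norm {n : ℕ} (i : Fin n) {x : EuclideanSpace ℝ (Fin n)}
    (hx : x ≠ 0) :
    HasGradientAt (fun y : EuclideanSpace ℝ (Fin n) => y i / ‖y‖)
      (‖x‖⁻¹ • EuclideanSpace.single i (1 : ℝ) - (x i / ‖x‖ ^ 3) • x) x := by
  have hr : ‖x‖ ≠ 0 := norm_ne_zero_iff.mpr hx
  have hcoord : HasFDerivAt (fun y : EuclideanSpace ℝ (Fin n) => y i)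
      (EuclideanSpace.proj i : EuclideanSpace ℝ (Fin n) →L[ℝ] ℝ) x :=
    (EuclideanSpace.proj i : EuclideanSpace ℝ (Fin n) →L[ℝ] ℝ).hasFDerivAt
  have hnorm := (hasStrictFDerivAt_norm_sq x).hasFDerivAt.sqrt (by positivity)
  simp only [Real.sqrt_sq (norm_nonneg _)] at hnorm
  have hquot := hcoord.mul ((hasDerivAt_inv hr).comp_hasFDerivAt x hnorm)
  rw [hasGradientAt_iff_hasFDerivAt]
  refine hquot.congr_fderiv ?_
  ext v
  simp [EuclideanSpace.inner_single_left]
  field_simp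
  ring

/-- The squared norm of the component of `v` orthogonal to a unit vector `ν`. -/
lemma norm_sub_inner_smul_sq {E : Type*} [NormedAddCommGroup E] [InnerProductSpace ℝ E]
    (v : E) {ν : E} (hν : ‖ν‖ = 1) :
    ‖v - ⟪v, ν⟫ • ν‖ ^ 2 = ‖v‖ ^ 2 - ⟪v, ν⟫ ^ 2 := by
  rw [norm_sub_sq_real, inner_smul_right, norm_smul, hν, mul_one, Real.norm_eq_abs, sq_abs]
  ring

/-- A unit vector `ν` attains equality in the Cauchy–Schwarz inequality with `x ≠ 0` iff it is
one of the two normalizations of `x`. -/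
lemma inner_sq_eq_norm_sq_iff {E : Type*} [NormedAddCommGroup E] [InnerProductSpace ℝ E]
    {x ν : E} (hx : x ≠ 0) (hν : ‖ν‖ = 1) :
    ⟪x, ν⟫ ^ 2 = ‖x‖ ^ 2 ↔ ν = ‖x‖⁻¹ • x ∨ ν = -(‖x‖⁻¹ • x) := by
  have hr : ‖x‖ ≠ 0 := norm_ne_zero_iff.mpr hx
  have hu : ‖‖x‖⁻¹ • x‖ = 1 := norm_smul_inv_norm (𝕜 := ℝ) hx
  rw [← inner_eq_one_iff_of_norm_eq_one (𝕜 := ℝ) hν hu,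
    ← inner_eq_neg_one_iff_of_norm_eq_one (𝕜 := ℝ) hν hu, sq_eq_sq_iff_eq_or_eq_neg,
    inner_smul_right, real_inner_comm, inv_mul_eq_iff_eq_mul₀ hr, inv_mul_eq_iff_eq_mul₀ hr,
    mul_one, mul_neg_one]

/-- For `f_i(y) = y_i/‖y‖`, a point `x ≠ 0` and a unit vector `ν`, the squared norms of
the tangential parts `∇ f_i(x) - ⟪∇ f_i(x), ν⟫ ν` sum to
`(n-2)/‖x‖² + ⟪x, ν⟫²/‖x‖⁴ ≤ (n-1)/‖x‖²`, with equality iff `ν = ±x/‖x‖`. -/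
theorem sum_sq_tangential_gradient_coord_div_norm
    (n : ℕ) (hn : 1 ≤ n) (x ν : EuclideanSpace ℝ (Fin n)) (hx : x ≠ 0) (hν : ‖ν‖ = 1) :
    (∑ i : Fin n,
        ‖gradient (fun y : EuclideanSpace ℝ (Fin n) => y i / ‖y‖) x
          - ⟪gradient (fun y : EuclideanSpace ℝ (Fin n) => y i / ‖y‖) x, ν⟫ • ν‖ ^ 2
      = (n - 2 : ℝ) / ‖x‖ ^ 2 + ⟪x, ν⟫ ^ 2 / ‖x‖ ^ 4) ∧
    ((n - 2 : ℝ) / ‖x‖ ^ 2 + ⟪x, ν⟫ ^ 2 / ‖x‖ ^ 4 ≤ (n - 1 : ℝ) / ‖x‖ ^ 2) ∧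
    ((n - 2 : ℝ) / ‖x‖ ^ 2 + ⟪x, ν⟫ ^ 2 / ‖x‖ ^ 4 = (n - 1 : ℝ) / ‖x‖ ^ 2
      ↔ ν = ‖x‖⁻¹ • x ∨ ν = -(‖x‖⁻¹ • x)) := by
  have hr : 0 < ‖x‖ := norm_pos_iff.mpr hx
  have hgap : (n - 1 : ℝ) / ‖x‖ ^ 2 - ((n - 2 : ℝ) / ‖x‖ ^ 2 + ⟪x, ν⟫ ^ 2 / ‖x‖ ^ 4)
      = (‖x‖ ^ 2 - ⟪x, ν⟫ ^ 2) / ‖x‖ ^ 4 := by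
    field_simp
    ring
  refine ⟨?_, ?_, ?_⟩
  · have hterm (i : Fin n) :
        ‖gradient (fun y : EuclideanSpace ℝ (Fin n) => y i / ‖y‖) x
          - ⟪gradient (fun y : EuclideanSpace ℝ (Fin n) => y i / ‖y‖) x, ν⟫ • ν‖ ^ 2
        = 1 / ‖x‖ ^ 2 - (1 / ‖x‖ ^ 4 + ⟪x, ν⟫ ^ 2 / ‖x‖ ^ 6) * x i ^ 2
          - 1 / ‖x‖ ^ 2 * ν i ^ 2 + 2 * ⟪x, ν⟫ / ‖x‖ ^ 4 * (x i * ν i) := by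
      rw [(hasGradientAt_coord_div_norm i hx).gradient, norm_sub_inner_smul_sq _ hν,
        norm_sub_sq_real, inner_sub_left]
      simp only [norm_smul, real_inner_smul_left, real_inner_smul_right,
        EuclideanSpace.inner_single_left, PiLp.norm_single, mul_pow, norm_inv,
        abs_norm, Real.norm_eq_abs, sq_abs, map_one, one_mul, abs_one]
      field_simp
      ring
    have hxx : ∑ i, x i ^ 2 = ‖x‖ ^ 2 := (EuclideanSpace.real_norm_sq_eq x).symm
    have hνν : ∑ i, ν i ^ 2 = 1 := by rw [← EuclideanSpace.real_norm_sq_eq, hν, one_pow]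
    have hxν : ∑ i, x i * ν i = ⟪x, ν⟫ := by
      simp [PiLp.inner_apply, mul_comm]
    simp only [hterm, Finset.sum_add_distrib, Finset.sum_sub_distrib, ← Finset.mul_sum, hxx, hνν,
      hxν, Finset.sum_const, Finset.card_univ, Fintype.card_fin, nsmul_eq_mul]
    field_simp
    ring
  · rw [← sub_nonneg, hgap]
    have hcs : ⟪x, ν⟫ ^ 2 ≤ ‖x‖ ^ 2 :=
      sq_le_sq' (by simpa [hν] using neg_le_of_abs_le (abs_real_inner_le_norm x ν))
        (by simpa [hν] using real_inner_le_norm x ν)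
    exact div_nonneg (sub_nonneg.mpr hcs) (by positivity)
  · rw [← inner_sq_eq_norm_sq_iff hx hν, eq_comm, ← sub_eq_zero, hgap,
      div_eq_zero_iff, or_iff_left (by positivity), sub_eq_zero, eq_comm]
end
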